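/- arXiv:1704.01043 — 2 statements merged into one kernel-verified Lean document; each statement's English description precedes it below -/
import Mathlib

section
/- For every ρ ∈ R(Ω), writing α = ρ(1,1) + ρ(−1,−1): Σ_{σ,τ ∈ Ω^k} E[ψ_{J,β}(σ)·ψ_{J,β}(τ)]·Π_{i=1}^{k} ρ(σ_i,τ_i) = 1 + E[tanh(βJ)²]·(2α−1)^k. Since k is even and E[tanh(βJ)²] > 0, this expression, as a function of ρ ∈ R(Ω), has the uniform distribution ρ̄ on Ω×Ω as its unique global minimizer; that is, the diluted k-spin model with even k satisfies condition MIN. -/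
open MeasureTheory Finset

/-- The spin value `±1` of a Boolean spin (`true ↔ +1`, `false ↔ -1`). -/
def spinVal (b : Bool) : ℝ := if b then 1 else -1

/-- The `k`-spin weight function `ψ_{J,β}(σ) = 1 + tanh(βJ)·σ_1⋯σ_k`. -/
noncomputable def kspinPsi (k : ℕ) (β J : ℝ) (σ : Fin k → Bool) : ℝ :=
  1 + Real.tanh (β * J) * ∏ i, spinVal (σ i)

/-- `R(Ω)` for `Ω = {±1}`: distributions on `Ω×Ω` with both marginals uniform. -/
def RSetBool : Set (Bool × Bool → ℝ) :=
  {ρ | (∀ p, 0 ≤ ρ p) ∧ (∀ s, ∑ t, ρ (s, t) = (2 : ℝ)⁻¹) ∧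
    (∀ s, ∑ t, ρ (t, s) = (2 : ℝ)⁻¹)}

/-- The second-moment functional of the diluted `k`-spin model. -/
noncomputable def kspinPair (k : ℕ) (β : ℝ) (ν : Measure ℝ)
    (ρ : Bool × Bool → ℝ) : ℝ :=
  ∑ σ : Fin k → Bool, ∑ τ : Fin k → Bool,
    (∫ J, kspinPsi k β J σ * kspinPsi k β J τ ∂ν) * ∏ i, ρ (σ i, τ i)

/-!
Multiply out `ψ(σ) ψ(τ) = 1 + tanh(βJ) (∏ σᵢ + ∏ τᵢ) + tanh(βJ)² ∏ σᵢ τᵢ`. Summed against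
`∏ ρ(σᵢ, τᵢ)`, each term factorizes over the coordinates into the `k`-th power of a moment of `ρ`:
the total mass `1`, the means of the two marginals, which vanish, and the correlation `2α - 1`.
For even `k` the remaining power is nonnegative, and it vanishes only if the correlation does; a
coupling of two uniform spins with correlation zero is uniform.
-/

theorem sum_sum_prod_eq_pow {κ R : Type*} [Fintype κ] [CommSemiring R] (k : ℕ) (f : κ → κ → R) :
    ∑ σ : Fin k → κ, ∑ τ : Fin k → κ, ∏ i, f (σ i) (τ i) = (∑ s, ∑ t, f s t) ^ k := by
  rw [Fintype.sum_pow]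
  exact sum_congr rfl fun σ _ => (Fintype.prod_sum fun i t => f (σ i) t).symm

theorem continuous_tanh : Continuous Real.tanh := by
  simp only [funext Real.tanh_eq_sinh_div_cosh]
  exact Real.continuous_sinh.div Real.continuous_cosh fun x => (Real.cosh_pos x).ne'

theorem tanh_eq_zero_iff {x : ℝ} : Real.tanh x = 0 ↔ x = 0 := by
  simpa only [Real.tanh_zero] using Real.tanh_injective.eq_iff (a := x) (b := 0)

section TanhMoments

variable {Ω : Type*} [MeasurableSpace Ω] {μ : Measure Ω} [IsFiniteMeasure μ] {f : Ω → ℝ}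

theorem integrable_tanh_pow (hf : AEMeasurable f μ) (n : ℕ) :
    Integrable (fun x => Real.tanh (f x) ^ n) μ := by
  have hmeas : AEStronglyMeasurable (fun x => Real.tanh (f x) ^ n) μ :=
    (continuous_tanh.pow n).comp_aestronglyMeasurable hf.aestronglyMeasurable
  refine .of_bound (C := 1) hmeas (.of_forall fun x => ?_)
  rw [norm_pow, Real.norm_eq_abs]
  exact pow_le_one₀ (abs_nonneg _) (Real.abs_tanh_lt_one _).le

theorem integral_tanh_sq_pos_iff (hf : AEMeasurable f μ) :
    0 < ∫ x, Real.tanh (f x) ^ 2 ∂μ ↔ 0 < μ (Function.support f) := by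
  have hsupp : Function.support (fun x => Real.tanh (f x) ^ 2) = Function.support f := by
    ext x
    simp only [Function.mem_support, ne_eq, pow_eq_zero_iff two_ne_zero, tanh_eq_zero_iff]
  rw [integral_pos_iff_support_of_nonneg (fun _ => sq_nonneg _) (integrable_tanh_pow hf 2), hsupp]

end TanhMoments

theorem integral_kspinPsi_mul_kspinPsi (k : ℕ) (β : ℝ) (ν : Measure ℝ) [IsProbabilityMeasure ν]
    (σ τ : Fin k → Bool) :
    ∫ J, kspinPsi k β J σ * kspinPsi k β J τ ∂ν =
      1 + (∫ J, Real.tanh (β * J) ∂ν) * (∏ i, spinVal (σ i) + ∏ i, spinVal (τ i)) +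
        (∫ J, Real.tanh (β * J) ^ 2 ∂ν) * ((∏ i, spinVal (σ i)) * ∏ i, spinVal (τ i)) := by
  set a := ∏ i, spinVal (σ i)
  set b := ∏ i, spinVal (τ i)
  have hconst : Integrable (fun _ : ℝ => (1 : ℝ)) ν := integrable_const 1
  have hlin : Integrable (fun J => Real.tanh (β * J) * (a + b)) ν := by
    simpa only [pow_one] using (integrable_tanh_pow (by fun_prop) 1).mul_const (a + b)
  have hquad : Integrable (fun J => Real.tanh (β * J) ^ 2 * (a * b)) ν :=
    (integrable_tanh_pow (by fun_prop) 2).mul_const (a * b)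
  have hexpand (J : ℝ) : kspinPsi k β J σ * kspinPsi k β J τ =
      1 + Real.tanh (β * J) * (a + b) + Real.tanh (β * J) ^ 2 * (a * b) := by
    simp only [kspinPsi, a, b]
    ring
  simp only [hexpand]
  rw [integral_add (by fun_prop) hquad, integral_add hconst hlin, integral_mul_const,
    integral_mul_const, integral_const, probReal_univ, one_smul]

/-- The marginal conditions defining `R(Ω)`, for possibly signed weights `ρ` on `Ω × Ω`: the class
on which the second-moment functional is computed and minimized. -/
def HasUniformMarginals (ρ : Bool × Bool → ℝ) : Prop :=
  (∀ s, ∑ t, ρ (s, t) = (2 : ℝ)⁻¹) ∧ ∀ t, ∑ s, ρ (s, t) = (2 : ℝ)⁻¹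

theorem sum_spinVal : ∑ s, spinVal s = 0 := by
  simp [spinVal]

theorem hasUniformMarginals_uniform : HasUniformMarginals fun _ => (4 : ℝ)⁻¹ := by
  constructor <;> intro <;> norm_num

theorem uniform_mem_RSetBool : (fun _ => (4 : ℝ)⁻¹) ∈ RSetBool :=
  ⟨fun _ => by positivity, hasUniformMarginals_uniform⟩

namespace HasUniformMarginals

variable {ρ : Bool × Bool → ℝ}

theorem sum_sum_eq_one (hρ : HasUniformMarginals ρ) : ∑ s, ∑ t, ρ (s, t) = 1 := by
  simp_rw [hρ.1]
  norm_num

theorem sum_sum_spinVal_fst_mul (hρ : HasUniformMarginals ρ) :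
    ∑ s, ∑ t, spinVal s * ρ (s, t) = 0 := by
  simp only [← mul_sum, hρ.1, ← sum_mul, sum_spinVal, zero_mul]

theorem sum_sum_spinVal_snd_mul (hρ : HasUniformMarginals ρ) :
    ∑ s, ∑ t, spinVal t * ρ (s, t) = 0 := by
  rw [sum_comm]
  simp only [← mul_sum, hρ.2, ← sum_mul, sum_spinVal, zero_mul]

theorem sum_sum_spinVal_mul_spinVal_mul (hρ : HasUniformMarginals ρ) :
    ∑ s, ∑ t, spinVal s * spinVal t * ρ (s, t) =
      2 * (ρ (true, true) + ρ (false, false)) - 1 := by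
  have hmass := hρ.sum_sum_eq_one
  simp only [Fintype.sum_bool] at hmass
  simp only [Fintype.sum_bool, spinVal, if_true, Bool.false_eq_true, if_false]
  linarith

theorem eq_uniform_of_correlation_eq_zero (hρ : HasUniformMarginals ρ)
    (hcorr : 2 * (ρ (true, true) + ρ (false, false)) - 1 = 0) : ρ = fun _ => (4 : ℝ)⁻¹ := by
  obtain ⟨hrow, hcol⟩ := hρ
  simp only [Fintype.sum_bool] at hrow hcol
  funext ⟨s, t⟩
  cases s <;> cases t <;> linarith [hrow true, hrow false, hcol true, hcol false]

variable {k : ℕ} (β : ℝ) (ν : Measure ℝ) [IsProbabilityMeasure ν]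

theorem kspinPair_eq (hρ : HasUniformMarginals ρ) (hk : k ≠ 0) :
    kspinPair k β ν ρ = 1 + (∫ J, Real.tanh (β * J) ^ 2 ∂ν) *
      (2 * (ρ (true, true) + ρ (false, false)) - 1) ^ k := by
  have hterm (σ τ : Fin k → Bool) :
      (∫ J, kspinPsi k β J σ * kspinPsi k β J τ ∂ν) * ∏ i, ρ (σ i, τ i) =
        ∏ i, ρ (σ i, τ i) +
          (∫ J, Real.tanh (β * J) ∂ν) * ∏ i, spinVal (σ i) * ρ (σ i, τ i) +
          (∫ J, Real.tanh (β * J) ∂ν) * ∏ i, spinVal (τ i) * ρ (σ i, τ i) +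
          (∫ J, Real.tanh (β * J) ^ 2 ∂ν) *
            ∏ i, spinVal (σ i) * spinVal (τ i) * ρ (σ i, τ i) := by
    rw [integral_kspinPsi_mul_kspinPsi]
    simp only [prod_mul_distrib]
    ring
  simp only [kspinPair, hterm, sum_add_distrib, ← mul_sum]
  rw [sum_sum_prod_eq_pow k fun s t => ρ (s, t),
    sum_sum_prod_eq_pow k fun s t => spinVal s * ρ (s, t),
    sum_sum_prod_eq_pow k fun s t => spinVal t * ρ (s, t),
    sum_sum_prod_eq_pow k fun s t => spinVal s * spinVal t * ρ (s, t),
    hρ.sum_sum_eq_one, hρ.sum_sum_spinVal_fst_mul, hρ.sum_sum_spinVal_snd_mul,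
    hρ.sum_sum_spinVal_mul_spinVal_mul, one_pow, zero_pow hk, mul_zero, add_zero, add_zero]

end HasUniformMarginals

theorem kspinPair_uniform {k : ℕ} (hk : k ≠ 0) (β : ℝ) (ν : Measure ℝ) [IsProbabilityMeasure ν] :
    kspinPair k β ν (fun _ => (4 : ℝ)⁻¹) = 1 := by
  have hcorr : 2 * ((4 : ℝ)⁻¹ + 4⁻¹) - 1 = 0 := by norm_num
  rw [hasUniformMarginals_uniform.kspinPair_eq β ν hk, hcorr, zero_pow hk, mul_zero, add_zero]

theorem stmt16_general {k : ℕ} (hk : k ≠ 0) (hkeven : Even k) {β : ℝ} (hβ : β ≠ 0)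
    (ν : Measure ℝ) [IsProbabilityMeasure ν] (hν0 : 0 < ν {x : ℝ | x ≠ 0}) :
    (∀ ρ, HasUniformMarginals ρ →
      kspinPair k β ν ρ =
        1 + (∫ J, Real.tanh (β * J) ^ 2 ∂ν) *
          (2 * (ρ (true, true) + ρ (false, false)) - 1) ^ k) ∧
    (0 < ∫ J, Real.tanh (β * J) ^ 2 ∂ν) ∧
    (fun _ => (4 : ℝ)⁻¹) ∈ RSetBool ∧
    (∀ ρ, HasUniformMarginals ρ → ρ ≠ (fun _ => (4 : ℝ)⁻¹) →
      kspinPair k β ν (fun _ => (4 : ℝ)⁻¹) < kspinPair k β ν ρ) := by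
  have hsupp : Function.support (fun J => β * J) = {J : ℝ | J ≠ 0} := by
    ext J
    simp [hβ]
  have hpos : 0 < ∫ J, Real.tanh (β * J) ^ 2 ∂ν :=
    (integral_tanh_sq_pos_iff (by fun_prop)).2 (hsupp ▸ hν0)
  refine ⟨fun ρ hρ => hρ.kspinPair_eq β ν hk, hpos, uniform_mem_RSetBool, fun ρ hρ hne => ?_⟩
  rw [kspinPair_uniform hk, hρ.kspinPair_eq β ν hk]
  have hpow := hkeven.pow_pos fun hcorr => hne (hρ.eq_uniform_of_correlation_eq_zero hcorr)
  exact lt_add_of_pos_right 1 (mul_pos hpos hpow)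

/-- Lemma "Lemma_pSpin", condition MIN for the `k`-spin model with even
`k`: writing `α = ρ(1,1) + ρ(-1,-1)`, for every `ρ ∈ R(Ω)` the pair functional equals
`1 + E[tanh(βJ)²]·(2α-1)^k`; since `k` is even and `E[tanh(βJ)²] > 0`, the uniform
distribution `ρ̄` on `Ω×Ω` is its unique global minimizer on `R(Ω)`. -/
theorem stmt16 (k : ℕ) (hk : 2 ≤ k) (hkeven : Even k) (β : ℝ) (hβ : 0 < β)
    (ν : Measure ℝ) [IsProbabilityMeasure ν]
    (hνsymm : ν.map (fun x => -x) = ν)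
    (hν0 : 0 < ν {x : ℝ | x ≠ 0}) :
    (∀ ρ ∈ RSetBool,
      kspinPair k β ν ρ =
        1 + (∫ J, Real.tanh (β * J) ^ 2 ∂ν) *
          (2 * (ρ (true, true) + ρ (false, false)) - 1) ^ k) ∧
    (0 < ∫ J, Real.tanh (β * J) ^ 2 ∂ν) ∧
    ((fun _ : Bool × Bool => (4 : ℝ)⁻¹) ∈ RSetBool) ∧
    (∀ ρ ∈ RSetBool, ρ ≠ (fun _ => (4 : ℝ)⁻¹) →
      kspinPair k β ν (fun _ => (4 : ℝ)⁻¹) < kspinPair k β ν ρ) := by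
  obtain ⟨hformula, hpos, hmem, hmin⟩ :=
    stmt16_general (Nat.ne_zero_of_lt hk) hkeven hβ.ne' ν hν0
  exact ⟨fun ρ hρ => hformula ρ hρ.2, hpos, hmem, fun ρ hρ => hmin ρ hρ.2⟩
end

section
/- The following two inequalities hold: (i) max_{c,c'∈Ω} d_TV( μ_B(·|c), μ_B(·|c') ) ≤ 2q·Σ_{b∈B} P[Y=b]·d_TV( μ_Ω(·|b), u ); (ii) Σ_{b∈B} P[Y=b]·d_TV( μ_Ω(·|b), u ) ≤ 2·max_{c,c'∈Ω} d_TV( μ_B(·|c), μ_B(·|c') ). (In the paper, μ is the joint law, under the Gibbs measure of a factor tree with uniform root marginal, of the spin at the root and the spins on the vertices at distance 2ℓ from the root; these inequalities imply that the point-to-set correlation corr and the broadcasting distance broad of a sequence of factor trees vanish simultaneously in the limit ℓ→∞.) -/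
open Finset

/-!
Total variation is half an `ℓ¹` distance, so both inequalities compare, in `ℓ¹(B)`, the distances
between the `q` points `p (c, ·)` with their distances to the barycentre. A distance between two of
the points is at most the sum of all distances to the barycentre, by the triangle inequality;
conversely, the distance from a point to the barycentre is at most the average of its distances to
the other points, hence at most their maximum.
-/

open scoped BigOperators

theorem dist_le_sum_dist {ι X : Type*} [Fintype ι] [PseudoMetricSpace X] (x : ι → X) (a : X)
    (i j : ι) : dist (x i) (x j) ≤ ∑ k, dist (x k) a := by
  obtain rfl | hij := eq_or_ne i j
  · rw [dist_self]
    positivity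
  · calc
      dist (x i) (x j) ≤ dist (x i) a + dist (x j) a := dist_triangle_right _ _ _
      _ ≤ ∑ k, dist (x k) a :=
        add_le_sum (f := fun k ↦ dist (x k) a) (fun _ _ ↦ dist_nonneg) (mem_univ i) (mem_univ j) hij

section NormedSpace

variable {Ω B E : Type*} [Fintype Ω] [Fintype B] [SeminormedAddCommGroup E] [NormedSpace ℝ E]

theorem card_mul_norm_sub_mean_le_sum_norm_sub (x : Ω → E) (i : Ω) :
    (Fintype.card Ω : ℝ) * ‖x i - (Fintype.card Ω : ℝ)⁻¹ • ∑ j, x j‖ ≤ ∑ j, ‖x i - x j‖ := by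
  have : Nonempty Ω := ⟨i⟩
  have hq : (Fintype.card Ω : ℝ) ≠ 0 := Nat.cast_ne_zero.2 Fintype.card_ne_zero
  have hsum : (Fintype.card Ω : ℝ) • (x i - (Fintype.card Ω : ℝ)⁻¹ • ∑ j, x j) =
      ∑ j, (x i - x j) := by
    rw [smul_sub, smul_inv_smul₀ hq, sum_sub_distrib, sum_const, card_univ, Nat.cast_smul_eq_nsmul]
  calc
    _ = ‖∑ j, (x i - x j)‖ := by rw [← hsum, norm_smul, RCLike.norm_natCast]
    _ ≤ ∑ j, ‖x i - x j‖ := norm_sum_le _ _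

/-- The broadcasting distance `d_TV(μ_B(·|c), μ_B(·|c'))` between the conditional laws of the second
coordinate, where `p` is the density of `μ`. As the first marginal is meant to be uniform, the
conditional densities are encoded as `q • p (c, ·)` with `q = |Ω|`. -/
noncomputable def broadcastDist (p : Ω × B → E) (c c' : Ω) : ℝ :=
  (1 / 2 : ℝ) * ∑ b, ‖(Fintype.card Ω : ℝ) • p (c, b) - (Fintype.card Ω : ℝ) • p (c', b)‖

/-- The point-to-set correlation `∑ b, P[Y = b] * d_TV(μ_Ω(·|b), u)`, where `p` is the density of
`μ`. The factor `P[Y = b]` is multiplied into the total variation distance, which avoids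
conditioning on null events. -/
noncomputable def pointToSetCorr (p : Ω × B → E) : ℝ :=
  ∑ b, (1 / 2 : ℝ) * ∑ c, ‖p (c, b) - (Fintype.card Ω : ℝ)⁻¹ • ∑ c', p (c', b)‖

theorem broadcastDist_eq_card_mul (p : Ω × B → E) (c c' : Ω) :
    broadcastDist p c c' =
      (Fintype.card Ω : ℝ) * ∑ b, (1 / 2 : ℝ) * ‖p (c, b) - p (c', b)‖ := by
  simp only [broadcastDist, ← smul_sub, norm_smul, RCLike.norm_natCast, ← mul_sum]
  ring

theorem broadcastDist_le_card_mul_pointToSetCorr (p : Ω × B → E) (c c' : Ω) :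
    broadcastDist p c c' ≤ (Fintype.card Ω : ℝ) * pointToSetCorr p := by
  rw [broadcastDist_eq_card_mul, pointToSetCorr]
  gcongr with b
  simpa only [dist_eq_norm] using dist_le_sum_dist (fun c ↦ p (c, b)) _ c c'

theorem card_mul_pointToSetCorr_le_sum (p : Ω × B → E) :
    (Fintype.card Ω : ℝ) * pointToSetCorr p ≤
      ∑ c, ∑ c', ∑ b, (1 / 2 : ℝ) * ‖p (c, b) - p (c', b)‖ :=
  calc
    _ = ∑ c, ∑ b, (1 / 2 : ℝ) * ((Fintype.card Ω : ℝ) *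
          ‖p (c, b) - (Fintype.card Ω : ℝ)⁻¹ • ∑ c', p (c', b)‖) := by
      rw [sum_comm]
      simp only [pointToSetCorr, mul_sum, mul_left_comm]
    _ ≤ ∑ c, ∑ b, (1 / 2 : ℝ) * ∑ c', ‖p (c, b) - p (c', b)‖ := by
      gcongr with c _ b
      exact card_mul_norm_sub_mean_le_sum_norm_sub (fun c ↦ p (c, b)) c
    _ = ∑ c, ∑ c', ∑ b, (1 / 2 : ℝ) * ‖p (c, b) - p (c', b)‖ := by
      simp only [mul_sum]
      exact sum_congr rfl fun c _ ↦ sum_comm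

theorem pointToSetCorr_le_expect_broadcastDist (p : Ω × B → E) :
    pointToSetCorr p ≤ 𝔼 c, 𝔼 c', broadcastDist p c c' := by
  obtain _ | _ := isEmpty_or_nonempty Ω
  · simp [pointToSetCorr]
  have hq : (0 : ℝ) < Fintype.card Ω := Nat.cast_pos.2 Fintype.card_pos
  calc
    pointToSetCorr p
      ≤ (∑ c, ∑ c', ∑ b, (1 / 2 : ℝ) * ‖p (c, b) - p (c', b)‖) / Fintype.card Ω :=
        (le_div_iff₀' hq).2 (card_mul_pointToSetCorr_le_sum p)
    _ = 𝔼 c, 𝔼 c', broadcastDist p c c' := by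
      simp only [Fintype.expect_eq_sum_div_card, broadcastDist_eq_card_mul, ← mul_sum,
        mul_div_cancel_left₀ _ hq.ne']

theorem stmt17_general [Nonempty Ω] (p : Ω × B → E) :
    (∀ c c', broadcastDist p c c' ≤ (Fintype.card Ω : ℝ) * pointToSetCorr p) ∧
      pointToSetCorr p ≤
        univ.sup' univ_nonempty fun cc : Ω × Ω ↦ broadcastDist p cc.1 cc.2 := by
  refine ⟨broadcastDist_le_card_mul_pointToSetCorr p,
    (pointToSetCorr_le_expect_broadcastDist p).trans ?_⟩
  exact expect_le univ_nonempty fun c _ ↦ expect_le univ_nonempty fun c' _ ↦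
    le_sup' (fun cc : Ω × Ω ↦ broadcastDist p cc.1 cc.2) (mem_univ (c, c'))

end NormedSpace

/-- Lemma "lemma:CorrVsBroad": let `μ` be a joint distribution on
`Ω × B` with uniform `Ω`-marginal, given by its probability mass function `p`.  Writing
`T b = P[Y=b]·d_TV(μ_Ω(·|b), u) = (1/2)·Σ_c |p(c,b) - (Σ_{c'} p(c',b))/q|` and
`d_TV(μ_B(·|c), μ_B(·|c')) = (1/2)·Σ_b |q·p(c,b) - q·p(c',b)|`, one has
(i) `max_{c,c'} d_TV(μ_B(·|c), μ_B(·|c')) ≤ 2q·Σ_b T b`, and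
(ii) `Σ_b T b ≤ 2·max_{c,c'} d_TV(μ_B(·|c), μ_B(·|c'))`. -/
theorem stmt17 {Ω B : Type*} [Fintype Ω] [Fintype B] [Nonempty Ω] [DecidableEq Ω]
    (p : Ω × B → ℝ) (hp0 : ∀ x, 0 ≤ p x) (hpsum : ∑ x : Ω × B, p x = 1)
    (hmarg : ∀ c : Ω, ∑ b : B, p (c, b) = (Fintype.card Ω : ℝ)⁻¹) :
    (∀ c c' : Ω,
      (1 / 2 : ℝ) * ∑ b : B,
          |(Fintype.card Ω : ℝ) * p (c, b) - (Fintype.card Ω : ℝ) * p (c', b)| ≤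
        2 * (Fintype.card Ω : ℝ) *
          ∑ b : B, (1 / 2 : ℝ) * ∑ c'' : Ω,
            |p (c'', b) - (∑ c''' : Ω, p (c''', b)) / (Fintype.card Ω : ℝ)|) ∧
    ((∑ b : B, (1 / 2 : ℝ) * ∑ c'' : Ω,
        |p (c'', b) - (∑ c''' : Ω, p (c''', b)) / (Fintype.card Ω : ℝ)|) ≤
      2 * Finset.univ.sup' Finset.univ_nonempty (fun cc : Ω × Ω =>
        (1 / 2 : ℝ) * ∑ b : B,
          |(Fintype.card Ω : ℝ) * p (cc.1, b) - (Fintype.card Ω : ℝ) * p (cc.2, b)|)) := by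
  have h := stmt17_general p
  simp only [broadcastDist, pointToSetCorr, smul_eq_mul, Real.norm_eq_abs, ← div_eq_inv_mul] at h
  exact ⟨fun c c' ↦ (h.1 c c').trans <|
      mul_le_mul_of_nonneg_right (by simp [two_mul]) (by positivity),
    h.2.trans <| le_mul_of_one_le_left (h.2.trans' <| by positivity) one_le_two⟩
end
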